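/- arXiv:2203.10293 — 2 statements merged into one kernel-verified Lean document; each statement's English description precedes it below -/
import Mathlib

section
/- For every natural number n ≥ 1, setting m = n^{n·B·(B−1)} where B = binomial(2n,n), the following holds: for every partition P of [ω]^n and every Q ∈ P*, there is a set I ⊆ {0,…,n−1} such that for every infinite set X ⊆ ℕ with [X]^{2n} ⊆ Q there is a partition {R_0, R_1, …, R_m} of X such that (1) R_0 is finite of cardinality at most m, and (2) for every i with 1 ≤ i ≤ m, the set R_i is an infinite I-canonical set for P. -/
/-! Common definitions. -/

/-- The `i`-th smallest element of a finite set of naturals (default 0 if `i ≥ |s|`). -/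
def nth (s : Finset ℕ) (i : ℕ) : ℕ := (s.sort (· ≤ ·)).getD i 0

/-- `[ω]^n` : the set of `n`-element subsets of `ℕ` (as `Finset`s). -/
def cube (n : ℕ) : Set (Finset ℕ) := {s | s.card = n}

/-- `P` is a partition of `Z` (one member may be empty). -/
def IsPartitionOn (Z : Set (Finset ℕ)) (P : Set (Set (Finset ℕ))) : Prop :=
  ⋃₀ P = Z ∧ ∀ A ∈ P, ∀ B ∈ P, A ∩ B = ∅ ∨ A = B

/-- The equivalence relation `≈_P` induced by a partition `P`. -/
def EquivP (P : Set (Set (Finset ℕ))) (p q : Finset ℕ) : Prop := ∃ A ∈ P, p ∈ A ∧ q ∈ A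

/-- `X` is `I`-canonical for a partition `P` of `[ω]^n`. -/
def ICanon (n : ℕ) (P : Set (Set (Finset ℕ))) (I : Set ℕ) (X : Set ℕ) : Prop :=
  ∀ p q : Finset ℕ, ↑p ⊆ X → p.card = n → ↑q ⊆ X → q.card = n →
    (EquivP P p q ↔ ∀ i ∈ I, nth p i = nth q i)

/-- `X` is canonical for a partition `P` of `[ω]^n`. -/
def Canon (n : ℕ) (P : Set (Set (Finset ℕ))) (X : Set ℕ) : Prop :=
  ∃ I : Set ℕ, I ⊆ Set.Iio n ∧ ICanon n P I X

/-- `X` is homogeneous for a partition `P` of `[ω]^n`. -/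
def Homog (n : ℕ) (P : Set (Set (Finset ℕ))) (X : Set ℕ) : Prop :=
  ∃ A ∈ P, ∀ s : Finset ℕ, ↑s ⊆ X → s.card = n → s ∈ A

/-- `[2n]^n` : the `n`-element subsets of `{0, …, 2n-1}`. -/
def idx (n : ℕ) : Finset (Finset ℕ) := Finset.powersetCard n (Finset.range (2 * n))

/-- The set `Q_{pq} = { z ∈ [ω]^{2n} : {z_[i] : i ∈ p} ≈_P {z_[i] : i ∈ q} }`. -/
def Qpq (n : ℕ) (P : Set (Set (Finset ℕ))) (p q : Finset ℕ) : Set (Finset ℕ) :=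
  {z | z.card = 2 * n ∧ EquivP P (p.image (nth z)) (q.image (nth z))}

/-- `P*` : the atoms of the field of subsets of `[ω]^{2n}` generated by the sets `Q_{pq}`. -/
def Atoms (n : ℕ) (P : Set (Set (Finset ℕ))) : Set (Set (Finset ℕ)) :=
  {Q | Q.Nonempty ∧ ∃ S : Finset ℕ → Finset ℕ → Set (Finset ℕ),
    (∀ p ∈ idx n, ∀ q ∈ idx n, S p q = Qpq n P p q ∨ S p q = cube (2 * n) \ Qpq n P p q) ∧
    Q = ⋂ p ∈ idx n, ⋂ q ∈ idx n, S p q}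

/-- `I_{pq} = { i < n : p_[i] = q_[i] }`. -/
def Ipq (n : ℕ) (p q : Finset ℕ) : Set ℕ := {i | i < n ∧ nth p i = nth q i}

/-- `I(Q) = ⋂ { I_{pq} : p, q ∈ [2n]^n, Q ⊆ Q_{pq} }`. -/
def IofQ (n : ℕ) (P : Set (Set (Finset ℕ))) (Q : Set (Finset ℕ)) : Set ℕ :=
  ⋂ p ∈ idx n, ⋂ q ∈ idx n, ⋂ (_ : Q ⊆ Qpq n P p q), Ipq n p q

/-- `ρ(a,b) = |(a △ b) ∩ X|`, identifying `a` with `{0, …, a-1}`. -/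
noncomputable def rho (X : Set ℕ) (a b : ℕ) : ℕ := (X ∩ Set.Ico (min a b) (max a b)).ncard

/-- The sparsity `d(x) = min { ρ(a,b) : a, b ∈ x ∪ {e}, a ≠ b }` (with `d(∅) = ⊤ = ω`). -/
noncomputable def sparsity (X : Set ℕ) (e : ℕ) (x : Finset ℕ) : ℕ∞ :=
  ⨅ a ∈ (x ∪ {e} : Finset ℕ), ⨅ b ∈ (x ∪ {e} : Finset ℕ), ⨅ _ : a ≠ b, (rho X a b : ℕ∞)

/-- `r(x,y) = max_{b ∈ y} min { ρ(a,b) : a ∈ x ∪ {e}, a ≤ b }`. -/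
noncomputable def rfun (X : Set ℕ) (e : ℕ) (x y : Finset ℕ) : ℕ :=
  y.sup fun b => sInf ((fun a => rho X a b) '' {a : ℕ | a ∈ (x ∪ {e} : Finset ℕ) ∧ a ≤ b})

/-- `x →_{pq} y` : there is `z ∈ [X]^{2n}` with `{z_[i] : i ∈ p} = x` and `{z_[i] : i ∈ q} = y`. -/
def Arrow (X : Set ℕ) (n : ℕ) (p q x y : Finset ℕ) : Prop :=
  ∃ z : Finset ℕ, ↑z ⊆ X ∧ z.card = 2 * n ∧ p.image (nth z) = x ∧ q.image (nth z) = y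

/-- `x ↔_Q y` : `x →_{pq} y` for some `p, q ∈ [2n]^n` with `Q ⊆ Q_{pq}`. -/
def RelQ (n : ℕ) (P : Set (Set (Finset ℕ))) (Q : Set (Finset ℕ)) (X : Set ℕ)
    (x y : Finset ℕ) : Prop :=
  ∃ p ∈ idx n, ∃ q ∈ idx n, Q ⊆ Qpq n P p q ∧ Arrow X n p q x y

/-- `x_0, …, x_l` is a `t`-cascade. -/
def IsCascade (n : ℕ) (P : Set (Set (Finset ℕ))) (Q : Set (Finset ℕ)) (X : Set ℕ) (e : ℕ)
    (t l : ℕ) (x : ℕ → Finset ℕ) : Prop :=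
  (∀ i ≤ l, ↑(x i) ⊆ X \ {e} ∧ (x i).card = n) ∧
  ∀ i < l, ((n ^ (t - 2 * i) : ℕ) : ℕ∞) ≤ sparsity X e (x i) ∧
    rfun X e (x i) (x (i + 1)) ≤ n ^ (t - 2 * i - 1) ∧
    RelQ n P Q X (x i) (x (i + 1))

/-- The `n`-fold Fubini power `u ⊗ ⋯ ⊗ u` of an ultrafilter on `ℕ`, as an
ultrafilter on `Fin n → ℕ`. -/
noncomputable def tensorPow (u : Ultrafilter ℕ) : (n : ℕ) → Ultrafilter (Fin n → ℕ)
  | 0 => pure (fun i => i.elim0)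
  | n + 1 => u.bind fun a => (tensorPow u n).map (Fin.cons a)

/-- The diagonal ultrafilter extension `f̃(u, u, …, u)` of `f : ℕ^n → ℕ`. -/
noncomputable def diagExt {n : ℕ} (f : (Fin n → ℕ) → ℕ) (u : Ultrafilter ℕ) : Ultrafilter ℕ :=
  (tensorPow u n).map f

/-- The Rudin–Keisler preorder. -/
def RKle (u v : Ultrafilter ℕ) : Prop := ∃ h : ℕ → ℕ, v.map h = u

/-- Rudin–Keisler equivalence. -/
def RKeq (u v : Ultrafilter ℕ) : Prop := RKle u v ∧ RKle v u

/-- `u` is nonprincipal: it contains no finite set. -/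
def Nonprincipal (u : Ultrafilter ℕ) : Prop := ∀ S : Set ℕ, S.Finite → S ∉ u

/-- `u` is a Ramsey ultrafilter. -/
def IsRamseyU (u : Ultrafilter ℕ) : Prop :=
  Nonprincipal u ∧ ∀ n : ℕ, 1 ≤ n → ∀ P : Set (Set (Finset ℕ)),
    IsPartitionOn (cube n) P → P.Finite → ∃ X ∈ u, Homog n P X

/-- `f : ℕ^n → ℕ` is selectively upward injective on `X` w.r.t. the index set `I`
(`I = ∅` gives "upward constant"). -/
def SelUpInjWrt (n : ℕ) (f : (Fin n → ℕ) → ℕ) (X : Set ℕ) (I : Set (Fin n)) : Prop :=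
  ∀ x y : Fin n → ℕ, (∀ i, x i ∈ X) → (∀ i, y i ∈ X) → StrictMono x → StrictMono y →
    (f x = f y ↔ ∀ i ∈ I, x i = y i)

/-- Two pairs of tuples have the same relative order type. -/
def SameType {n : ℕ} (x y x' y' : Fin n → ℕ) : Prop :=
  ∀ i j, (x i < y j ↔ x' i < y' j) ∧ (y j < x i ↔ y' j < x' i)

/-- Abstract type-invariant equivalence relation on increasing tuples. -/
structure TypeInv (n : ℕ) (r : (Fin n → ℕ) → (Fin n → ℕ) → Prop) : Prop where
  rfl' : ∀ x, StrictMono x → r x x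
  symm' : ∀ x y, r x y → r y x
  trans' : ∀ x y z, r x y → r y z → r x z
  inv : ∀ x y x' y', StrictMono x → StrictMono y → StrictMono x' → StrictMono y' →
    SameType x y x' y' → r x y → r x' y'

theorem exists_next {n : ℕ} (x y : Fin n → ℕ) (hx : StrictMono x) (hy : StrictMono y) :
    ∃ (K : ℕ) (h : ℕ → ℕ), 0 < K ∧ (∀ i, h (x i) = K * (y i + 1)) ∧
      (∀ a b, (a ∈ Set.range x ∪ Set.range y) → (b ∈ Set.range x ∪ Set.range y) →
        a < b → h a < h b) ∧
      (∀ i c, h (y i) = K * c → ∃ l, x l = y i) := by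
  classical
  obtain ⟨K, hK⟩ : ∃ K, ∀ a ∈ Set.range x ∪ Set.range y, a + 1 < K := by
    have hf : (Set.range x ∪ Set.range y).Finite :=
      (Set.finite_range x).union (Set.finite_range y)
    obtain ⟨M, hM⟩ := hf.bddAbove
    exact ⟨M + 2, fun a ha => by have := hM ha; omega⟩
  let c : ℕ → ℕ := fun v => (Finset.univ.filter (fun i => x i ≤ v)).sup (fun i => y i + 1)
  let d : ℕ → ℕ := fun v => if ∃ i, x i = v then 0 else v + 1
  have hc : ∀ i, c (x i) = y i + 1 := by
    intro i
    apply le_antisymm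
    · apply Finset.sup_le
      intro j hj
      simp only [Finset.mem_filter, Finset.mem_univ, true_and] at hj
      have := hy.monotone (hx.le_iff_le.1 hj)
      omega
    · exact Finset.le_sup (f := fun i => y i + 1) (by simp)
  have hd : ∀ i, d (x i) = 0 := fun i => if_pos ⟨i, rfl⟩
  have hdle : ∀ v, d v ≤ v + 1 := by
    intro v
    by_cases h : ∃ i, x i = v <;> simp [d, h]
  have hcm : ∀ a b, a ≤ b → c a ≤ c b := by
    intro a b hab
    apply Finset.sup_mono
    intro i hi
    simp only [Finset.mem_filter, Finset.mem_univ, true_and] at hi ⊢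
    omega
  refine ⟨K + 1, fun v => (K + 1) * c v + d v, by omega, ?_, ?_, ?_⟩
  · intro i
    simp [hc, hd]
  · intro a b ha hb hab
    have h1 := hK a ha
    have h2 := hdle a
    show (K + 1) * c a + d a < (K + 1) * c b + d b
    rcases (hcm a b hab.le).lt_or_eq with h | h
    · have : (K + 1) * (c a + 1) ≤ (K + 1) * c b := Nat.mul_le_mul_left _ h
      rw [Nat.mul_add] at this
      omega
    · rw [h]
      have hbx : ¬ ∃ i, x i = b := by
        rintro ⟨i, rfl⟩
        rw [hc] at h
        have : c a < y i + 1 := by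
          rw [Finset.sup_lt_iff (by simp)]
          intro j hj
          simp only [Finset.mem_filter, Finset.mem_univ, true_and] at hj
          have := hy (hx.lt_iff_lt.1 (lt_of_le_of_lt hj hab))
          omega
        omega
      have : d b = b + 1 := if_neg hbx
      omega
  · intro i e he
    by_contra hne
    have h3 : d (y i) = y i + 1 := if_neg hne
    have h1 := hK (y i) (Or.inr ⟨i, rfl⟩)
    have he : (K + 1) * c (y i) + d (y i) = (K + 1) * e := he
    have h4 : (K + 1) ∣ d (y i) := (Nat.dvd_add_right (Dvd.intro _ rfl)).1 (Dvd.intro _ he.symm)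
    have := Nat.le_of_dvd (by omega) h4
    omega

theorem key_step {n : ℕ} {r : (Fin n → ℕ) → (Fin n → ℕ) → Prop} (H : TypeInv n r) (i0 : Fin n) :
    ∀ (k : ℕ) (x y : Fin n → ℕ), StrictMono x → StrictMono y → r x y → x i0 < y i0 →
      (Finset.univ.filter (fun j => ∃ l, x j = y l)).card = k →
      ∃ x y : Fin n → ℕ, StrictMono x ∧ StrictMono y ∧ r x y ∧ ∀ l, x i0 ≠ y l := by
  intro k
  induction k using Nat.strong_induction_on with
  | _ k ih =>
  intro x y hx hy hr hlt hk
  by_cases hS : ∀ l, x i0 ≠ y l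
  · exact ⟨x, y, hx, hy, hr, hS⟩
  obtain ⟨K, h, hK0, hh, hmono, hdiv⟩ := exists_next x y hx hy
  have hmono' : ∀ a b, (a ∈ Set.range x ∪ Set.range y) → (b ∈ Set.range x ∪ Set.range y) →
        (a < b ↔ h a < h b) := by
    intro a b ha hb
    refine ⟨hmono a b ha hb, fun hab => ?_⟩
    by_contra hcon
    rcases (not_lt.1 hcon).lt_or_eq with h1 | h1
    · have := hmono b a hb ha h1
      omega
    · subst h1; omega
  have mx : ∀ i, x i ∈ Set.range x ∪ Set.range y := fun i => Or.inl ⟨i, rfl⟩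
  have my : ∀ i, y i ∈ Set.range x ∪ Set.range y := fun i => Or.inr ⟨i, rfl⟩
  have hsc : ∀ a b : ℕ, a < b ↔ K * (a + 1) < K * (b + 1) := fun a b => by
    rw [Nat.mul_lt_mul_left hK0]; omega
  let x' : Fin n → ℕ := fun i => K * (x i + 1)
  let y' : Fin n → ℕ := fun i => K * (y i + 1)
  let w : Fin n → ℕ := fun i => h (y i)
  have hx' : StrictMono x' := fun i j hij => (hsc _ _).1 (hx hij)
  have hy' : StrictMono y' := fun i j hij => (hsc _ _).1 (hy hij)
  have hw : StrictMono w := fun i j hij => hmono _ _ (my i) (my j) (hy hij)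
  have r1 : r x' y' := H.inv x y x' y' hx hy hx' hy' (fun i j => ⟨hsc _ _, hsc _ _⟩) hr
  have r2 : r y' w := by
    refine H.inv x y y' w hx hy hy' hw (fun i j => ?_) hr
    show (_ ↔ K * (y i + 1) < h (y j)) ∧ (_ ↔ h (y j) < K * (y i + 1))
    rw [← hh i]
    exact ⟨hmono' _ _ (mx i) (my j), hmono' _ _ (my j) (mx i)⟩
  have r3 : r x' w := H.trans' _ _ _ r1 r2
  have hlt' : x' i0 < w i0 := by
    have h1 : x' i0 < y' i0 := (hsc _ _).1 hlt
    have h2 : h (x i0) < h (y i0) := hmono _ _ (mx _) (my _) hlt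
    rw [hh] at h2
    exact h1.trans h2
  have hcoll : ∀ j i, x' j = w i → ∃ l, y i = x l ∧ x j = y l := by
    intro j i hji
    obtain ⟨l, hl⟩ := hdiv i (x j + 1) hji.symm
    refine ⟨l, hl.symm, ?_⟩
    have : K * (x j + 1) = h (y i) := hji
    rw [← hl, hh] at this
    have := Nat.eq_of_mul_eq_mul_left hK0 this
    omega
  have hsub : Finset.univ.filter (fun j => ∃ l, x' j = w l) ⊆
      Finset.univ.filter (fun j => ∃ l, x j = y l) := by
    intro j hj
    simp only [Finset.mem_filter, Finset.mem_univ, true_and] at hj ⊢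
    obtain ⟨i, hi⟩ := hj
    obtain ⟨l, _, hl⟩ := hcoll j i hi
    exact ⟨l, hl⟩
  refine ih _ ?_ x' w hx' hw r3 hlt' rfl
  rw [← hk]
  apply Finset.card_lt_card
  refine hsub.ssubset_of_ne (fun heq => ?_)
  have hdesc : ∀ j : Fin n, x j < y j → ∀ l, x j ≠ y l := by
    intro j
    induction j using WellFoundedLT.induction with
    | _ j ihj =>
    intro hj l hl
    have hjm : j ∈ Finset.univ.filter (fun j => ∃ l, x j = y l) := by simp; exact ⟨l, hl⟩
    rw [← heq] at hjm
    simp only [Finset.mem_filter, Finset.mem_univ, true_and] at hjm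
    obtain ⟨i, hi⟩ := hjm
    obtain ⟨l', h1, h2⟩ := hcoll j i hi
    have h3 : l' < j := hy.lt_iff_lt.1 (by omega)
    have h4 := hx h3
    exact ihj l' h3 (by omega) i h1.symm
  exact hS (hdesc i0 hlt)

theorem move_one {n : ℕ} {r : (Fin n → ℕ) → (Fin n → ℕ) → Prop} (H : TypeInv n r) (i0 : Fin n)
    (hi : ∃ x y, StrictMono x ∧ StrictMono y ∧ r x y ∧ x i0 ≠ y i0)
    (u v : Fin n → ℕ) (hu : StrictMono u) (hv : StrictMono v)
    (huv : ∀ j, j ≠ i0 → u j = v j) (hlt : u i0 < v i0) : r u v := by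
  classical
  obtain ⟨x, y, hx, hy, hr, hne⟩ : ∃ x y : Fin n → ℕ,
      StrictMono x ∧ StrictMono y ∧ r x y ∧ ∀ l, x i0 ≠ y l := by
    obtain ⟨x, y, hx, hy, hr, hne⟩ := hi
    rcases lt_or_gt_of_ne hne with h | h
    · exact key_step H i0 _ x y hx hy hr h rfl
    · exact key_step H i0 _ y x hy hx (H.symm' _ _ hr) h rfl
  let x1 : Fin n → ℕ := fun i => 2 * x i
  let y1 : Fin n → ℕ := fun i => 2 * y i
  let x2 : Fin n → ℕ := fun i => 2 * x i + if i = i0 then 1 else 0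
  have hx1 : StrictMono x1 := fun i j hij => by have := hx hij; simp only [x1]; omega
  have hy1 : StrictMono y1 := fun i j hij => by have := hy hij; simp only [y1]; omega
  have hx2 : StrictMono x2 := fun i j hij => by
    have := hx hij; simp only [x2]; split_ifs <;> omega
  have r1 : r x1 y1 := H.inv x y _ _ hx hy hx1 hy1
    (fun i j => by simp only [x1, y1]; omega) hr
  have r2 : r x2 y1 := H.inv x y _ _ hx hy hx2 hy1
    (fun i j => by
      simp only [x2, y1]
      split_ifs with h
      · have := hne j
        rw [← h] at this
        omega
      · omega) hr
  have r3 : r x1 x2 := H.trans' _ _ _ r1 (H.symm' _ _ r2)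
  refine H.inv x1 x2 u v hx1 hx2 hu hv (fun i j => ?_) r3
  have e1 : x i < x j ↔ i < j := hx.lt_iff_lt
  have e2 : x j < x i ↔ j < i := hx.lt_iff_lt
  simp only [x1, x2]
  by_cases hj : j = i0
  · subst hj
    by_cases hij : i = j
    · subst hij
      simp; omega
    · rw [huv i hij, hv.lt_iff_lt, hv.lt_iff_lt]
      have : x i ≠ x j := fun h => hij (hx.injective h)
      simp; omega
  · rw [← huv j hj, hu.lt_iff_lt, hu.lt_iff_lt]
    simp [hj]; omega

theorem lower {n : ℕ} {r : (Fin n → ℕ) → (Fin n → ℕ) → Prop} (H : TypeInv n r)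
    (x y : Fin n → ℕ) (hx : StrictMono x) (hy : StrictMono y)
    (hxy : ∀ i, (∀ x y, StrictMono x → StrictMono y → r x y → x i = y i) → x i = y i) :
    r x (fun i => min (x i) (y i)) := by
  let f : ℕ → Fin n → ℕ := fun k i => if i.val < k then min (x i) (y i) else x i
  have hf : ∀ k, StrictMono (f k) := by
    intro k i j hij
    have h1 := hx hij
    have h2 := hy hij
    have h3 : i.val < j.val := hij
    simp only [f]
    split_ifs <;> omega
  have key : ∀ k, k ≤ n → r x (f k) := by
    intro k
    induction k with
    | zero => intro _; simpa [f] using H.rfl' x hx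
    | succ k ih =>
      intro hk
      refine H.trans' _ _ _ (ih (by omega)) ?_
      let i0 : Fin n := ⟨k, by omega⟩
      have hoff : ∀ j, j ≠ i0 → f (k+1) j = f k j := by
        intro j hj
        have : j.val ≠ k := fun h => hj (Fin.ext h)
        simp only [f]
        split_ifs <;> omega
      have e1 : f (k+1) i0 = min (x i0) (y i0) := by simp [f, i0]
      have e2 : f k i0 = x i0 := by simp [f, i0]
      by_cases hlt : y i0 < x i0
      · apply H.symm'
        refine move_one H i0 ?_ _ _ (hf _) (hf _) hoff (by rw [e1, e2]; omega)
        by_contra hcon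
        push Not at hcon
        have := hxy i0 hcon
        omega
      · have : f (k+1) = f k := by
          funext j
          by_cases hj : j = i0
          · subst hj; rw [e1, e2]; omega
          · exact hoff j hj
        rw [this]
        exact H.rfl' _ (hf k)
  have := key n le_rfl
  have e : f n = fun i => min (x i) (y i) := by
    funext i; simp [f]
  rwa [e] at this

theorem canon_core {n : ℕ} {r : (Fin n → ℕ) → (Fin n → ℕ) → Prop} (H : TypeInv n r)
    (x y : Fin n → ℕ) (hx : StrictMono x) (hy : StrictMono y) :
    r x y ↔ ∀ i, (∀ x y, StrictMono x → StrictMono y → r x y → x i = y i) → x i = y i := by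
  constructor
  · intro hr i hi
    exact hi x y hx hy hr
  · intro h
    have h1 := lower H x y hx hy h
    have h2 := lower H y x hy hx (fun i hi => (h i hi).symm)
    have : (fun i => min (y i) (x i)) = fun i => min (x i) (y i) := by
      funext i; exact min_comm _ _
    rw [this] at h2
    exact H.trans' _ _ _ h1 (H.symm' _ _ h2)

theorem nth_image {n : ℕ} (x : Fin n → ℕ) (hx : StrictMono x) (i : Fin n) :
    nth (Finset.univ.image x) i = x i := by
  have hc : (Finset.univ.image x).card = n := by
    rw [Finset.card_image_of_injective _ hx.injective]; simp
  have h1 := Finset.orderEmbOfFin_unique hc (f := x) (fun i => by simp) hx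
  have h2 := congrFun h1 i
  rw [Finset.orderEmbOfFin_apply] at h2
  rw [h2]
  unfold nth
  rw [List.getD_eq_getElem _ _ (by rw [Finset.length_sort, hc]; exact i.2)]
  rfl

/-- The induced relation along an enumeration. -/
def rel {n : ℕ} (P : Set (Set (Finset ℕ))) (e : ℕ → ℕ) (x y : Fin n → ℕ) : Prop :=
  EquivP P (Finset.univ.image (e ∘ x)) (Finset.univ.image (e ∘ y))

/-- Position of `a` in the union of the ranges of `x` and `y`. -/
noncomputable def pos {n : ℕ} (x y : Fin n → ℕ) (a : ℕ) : ℕ := by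
  classical exact
  (Finset.univ.filter (fun j => x j < a)).card +
    (Finset.univ.filter (fun j => y j < a ∧ ∀ l, x l ≠ y j)).card

theorem exists_enum {n : ℕ} (x y : Fin n → ℕ) (hx : StrictMono x) (hy : StrictMono y) :
    ∃ g : ℕ → ℕ, StrictMono g ∧ (∀ i, g (pos x y (x i)) = x i) ∧
      (∀ i, g (pos x y (y i)) = y i) ∧ (∀ i, pos x y (x i) < 2 * n) ∧
      (∀ i, pos x y (y i) < 2 * n) := by
  classical
  obtain ⟨M, hM⟩ : ∃ M, ∀ a ∈ Set.range x ∪ Set.range y, a < M := by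
    have hf : (Set.range x ∪ Set.range y).Finite :=
      (Set.finite_range x).union (Set.finite_range y)
    obtain ⟨M, hM⟩ := hf.bddAbove
    exact ⟨M + 1, fun a ha => by have := hM ha; omega⟩
  have mx : ∀ i, x i ∈ Set.range x ∪ Set.range y := fun i => Or.inl ⟨i, rfl⟩
  have my : ∀ i, y i ∈ Set.range x ∪ Set.range y := fun i => Or.inr ⟨i, rfl⟩
  let A : ℕ → Prop := fun a => a ∈ Set.range x ∪ Set.range y ∨ M ≤ a
  have hA : (setOf A).Infinite := by
    apply (Set.infinite_of_not_bddAbove (not_bddAbove_Ici M)).mono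
    intro a ha
    exact Or.inr ha
  have hcount : ∀ a ∈ Set.range x ∪ Set.range y, Nat.count A a = pos x y a := by
    intro a ha
    rw [Nat.count_eq_card_filter_range]
    have : (Finset.range a).filter A =
        (Finset.univ.filter (fun j => x j < a)).image x ∪
        (Finset.univ.filter (fun j => y j < a ∧ ∀ l, x l ≠ y j)).image y := by
      ext b
      simp only [Finset.mem_filter, Finset.mem_range, Finset.mem_union, Finset.mem_image,
        Finset.mem_univ, true_and]
      constructor
      · rintro ⟨hb, (⟨i, rfl⟩ | ⟨i, rfl⟩) | h⟩
        · exact Or.inl ⟨i, hb, rfl⟩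
        · by_cases h : ∃ l, x l = y i
          · obtain ⟨l, hl⟩ := h
            exact Or.inl ⟨l, by omega, hl⟩
          · push Not at h
            exact Or.inr ⟨i, ⟨hb, h⟩, rfl⟩
        · have := hM a ha
          omega
      · rintro (⟨i, hb, rfl⟩ | ⟨i, ⟨hb, -⟩, rfl⟩)
        · exact ⟨hb, Or.inl (mx i)⟩
        · exact ⟨hb, Or.inl (my i)⟩
    rw [this, Finset.card_union_of_disjoint, Finset.card_image_of_injective _ hx.injective,
      Finset.card_image_of_injective _ hy.injective]
    · unfold pos; congr
    · rw [Finset.disjoint_left]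
      intro b hb hb'
      simp only [Finset.mem_filter, Finset.mem_image, Finset.mem_univ, true_and] at hb hb'
      obtain ⟨i, -, rfl⟩ := hb
      obtain ⟨j, ⟨-, h⟩, h'⟩ := hb'
      exact h i h'.symm
  have hlt : ∀ a ∈ Set.range x ∪ Set.range y, pos x y a < 2 * n := by
    intro a ha
    have e1 : (Finset.univ.filter (fun j => x j < a)).card ≤ n := by
      simpa using Finset.card_le_univ (Finset.univ.filter (fun j => x j < a))
    have e2 : (Finset.univ.filter (fun j => y j < a ∧ ∀ l, x l ≠ y j)).card ≤ n := by
      simpa using Finset.card_le_univ (Finset.univ.filter (fun j => y j < a ∧ ∀ l, x l ≠ y j))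
    have e : pos x y a = (Finset.univ.filter (fun j => x j < a)).card +
      (Finset.univ.filter (fun j => y j < a ∧ ∀ l, x l ≠ y j)).card := by unfold pos; congr
    rw [e]
    rcases ha with ⟨i, rfl⟩ | ⟨i, rfl⟩
    · have : (Finset.univ.filter (fun j => x j < x i)).card < n := by
        have := Finset.card_lt_univ_of_notMem (s := Finset.univ.filter (fun j => x j < x i))
          (x := i) (by simp)
        simpa using this
      omega
    · have : (Finset.univ.filter (fun j => y j < y i ∧ ∀ l, x l ≠ y j)).card < n := by
        have := Finset.card_lt_univ_of_notMem
          (s := Finset.univ.filter (fun j => y j < y i ∧ ∀ l, x l ≠ y j))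
          (x := i) (by simp)
        simpa using this
      omega
  refine ⟨Nat.nth A, Nat.nth_strictMono hA, fun i => ?_, fun i => ?_,
    fun i => hlt _ (mx i), fun i => hlt _ (my i)⟩
  · rw [← hcount _ (mx i)]; exact Nat.nth_count (Or.inl (mx i))
  · rw [← hcount _ (my i)]; exact Nat.nth_count (Or.inl (my i))

theorem pos_congr {n : ℕ} {x y x' y' : Fin n → ℕ} (hx : StrictMono x) (hy : StrictMono y)
    (hx' : StrictMono x') (hy' : StrictMono y') (h : SameType x y x' y') (i : Fin n) :
    pos x y (x i) = pos x' y' (x' i) ∧ pos x y (y i) = pos x' y' (y' i) := by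
  have hne : ∀ l j, x l ≠ y j ↔ x' l ≠ y' j := by
    intro l j
    have := h l j
    omega
  unfold pos
  simp only [hx.lt_iff_lt, hx'.lt_iff_lt, hy.lt_iff_lt, hy'.lt_iff_lt, hne, (h _ _).1, (h _ _).2]
  exact ⟨trivial, trivial⟩

theorem rel_iff {n : ℕ} {P : Set (Set (Finset ℕ))} {e : ℕ → ℕ} (he : StrictMono e)
    {x y : Fin n → ℕ} (hx : StrictMono x) (hy : StrictMono y) :
    ∃ z : Finset ℕ, ↑z ⊆ Set.range e ∧ z.card = 2 * n ∧
      (rel P e x y ↔ z ∈ Qpq n P (Finset.univ.image (fun i => pos x y (x i)))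
        (Finset.univ.image (fun i => pos x y (y i)))) := by
  obtain ⟨g, hg, g1, g2, p1, p2⟩ := exists_enum x y hx hy
  let f : Fin (2 * n) → ℕ := fun i => e (g i)
  have hf : StrictMono f := fun i j hij => he (hg hij)
  have hcard : (Finset.univ.image f).card = 2 * n := by
    rw [Finset.card_image_of_injective _ hf.injective]; simp
  refine ⟨Finset.univ.image f, ?_, hcard, ?_⟩
  · intro a ha
    simp only [Finset.coe_image, Finset.coe_univ, Set.image_univ] at ha
    obtain ⟨i, rfl⟩ := ha
    exact ⟨_, rfl⟩
  · have k : ∀ w : Fin n → ℕ, (∀ i, g (pos x y (w i)) = w i) → (∀ i, pos x y (w i) < 2 * n) →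
        (Finset.univ.image (fun i => pos x y (w i))).image (nth (Finset.univ.image f)) =
          Finset.univ.image (e ∘ w) := by
      intro w hw hw'
      rw [Finset.image_image]
      apply Finset.image_congr
      intro i _
      have := nth_image f hf ⟨_, hw' i⟩
      simp only [Function.comp]
      rw [this]
      simp only [f, hw]
    unfold Qpq rel
    simp only [Set.mem_setOf_eq, k x g1 p1, k y g2 p2, hcard, true_and]

theorem pos_mem_idx {n : ℕ} {x y : Fin n → ℕ} (hx : StrictMono x) (hy : StrictMono y) :
    Finset.univ.image (fun i => pos x y (x i)) ∈ idx n ∧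
    Finset.univ.image (fun i => pos x y (y i)) ∈ idx n := by
  obtain ⟨g, hg, g1, g2, p1, p2⟩ := exists_enum x y hx hy
  have k : ∀ w : Fin n → ℕ, StrictMono w → (∀ i, g (pos x y (w i)) = w i) →
      (∀ i, pos x y (w i) < 2 * n) → Finset.univ.image (fun i => pos x y (w i)) ∈ idx n := by
    intro w hwm hw hw'
    rw [idx, Finset.mem_powersetCard]
    constructor
    · intro a ha
      simp only [Finset.mem_image, Finset.mem_univ, true_and] at ha
      obtain ⟨i, rfl⟩ := ha
      simpa using hw' i
    · rw [Finset.card_image_of_injective]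
      · simp
      · intro i j hij
        have : g (pos x y (w i)) = g (pos x y (w j)) := congrArg g hij
        rw [hw, hw] at this
        exact hwm.injective this
  exact ⟨k x hx g1 p1, k y hy g2 p2⟩

theorem atom_hom {n : ℕ} {P : Set (Set (Finset ℕ))} {Q : Set (Finset ℕ)} (hQ : Q ∈ Atoms n P)
    {p q : Finset ℕ} (hp : p ∈ idx n) (hq : q ∈ idx n) {z z' : Finset ℕ} (hz : z ∈ Q)
    (hz' : z' ∈ Q) : z ∈ Qpq n P p q ↔ z' ∈ Qpq n P p q := by
  obtain ⟨-, S, hS, rfl⟩ := hQ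
  simp only [Set.mem_iInter] at hz hz'
  have h1 := hz p hp q hq
  have h2 := hz' p hp q hq
  rcases hS p hp q hq with h | h
  · rw [h] at h1 h2
    exact ⟨fun _ => h2, fun _ => h1⟩
  · rw [h] at h1 h2
    exact ⟨fun h' => absurd h' h1.2, fun h' => absurd h' h2.2⟩

theorem relP_congr {n : ℕ} {P : Set (Set (Finset ℕ))} {Q : Set (Finset ℕ)} (hQ : Q ∈ Atoms n P)
    {e e' : ℕ → ℕ} (he : StrictMono e) (he' : StrictMono e')
    (hX : ∀ z : Finset ℕ, ↑z ⊆ Set.range e → z.card = 2 * n → z ∈ Q)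
    (hX' : ∀ z : Finset ℕ, ↑z ⊆ Set.range e' → z.card = 2 * n → z ∈ Q)
    {x y x' y' : Fin n → ℕ} (hx : StrictMono x) (hy : StrictMono y)
    (hx' : StrictMono x') (hy' : StrictMono y') (h : SameType x y x' y') :
    rel P e x y ↔ rel P e' x' y' := by
  obtain ⟨z, z1, z2, z3⟩ := rel_iff (P := P) he hx hy
  obtain ⟨w, w1, w2, w3⟩ := rel_iff (P := P) he' hx' hy'
  rw [z3, w3]
  have e1 : (fun i => pos x' y' (x' i)) = fun i => pos x y (x i) := by
    funext i; exact (pos_congr hx hy hx' hy' h i).1.symm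
  have e2 : (fun i => pos x' y' (y' i)) = fun i => pos x y (y i) := by
    funext i; exact (pos_congr hx hy hx' hy' h i).2.symm
  rw [e1, e2]
  obtain ⟨m1, m2⟩ := pos_mem_idx hx hy
  exact atom_hom hQ m1 m2 (hX z z1 z2) (hX' w w1 w2)

theorem rel_typeInv {n : ℕ} {P : Set (Set (Finset ℕ))} (hP : IsPartitionOn (cube n) P)
    {Q : Set (Finset ℕ)} (hQ : Q ∈ Atoms n P) {e : ℕ → ℕ} (he : StrictMono e)
    (hX : ∀ z : Finset ℕ, ↑z ⊆ Set.range e → z.card = 2 * n → z ∈ Q) :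
    TypeInv n (rel P e) where
  rfl' x hx := by
    have : Finset.univ.image (e ∘ x) ∈ ⋃₀ P := by
      rw [hP.1]
      show _ = _
      rw [Finset.card_image_of_injective _ (he.comp hx).injective]; simp
    obtain ⟨A, hA, hm⟩ := this
    exact ⟨A, hA, hm, hm⟩
  symm' x y := fun ⟨A, hA, h1, h2⟩ => ⟨A, hA, h2, h1⟩
  trans' x y z := by
    rintro ⟨A, hA, h1, h2⟩ ⟨B, hB, h3, h4⟩
    rcases hP.2 A hA B hB with h | h
    · have : Finset.univ.image (e ∘ y) ∈ A ∩ B := ⟨h2, h3⟩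
      rw [h] at this
      exact this.elim
    · subst h
      exact ⟨A, hA, h1, h4⟩
  inv x y x' y' hx hy hx' hy' h := (relP_congr hQ he he hX hX hx hy hx' hy' h).1

theorem exists_tuple {n : ℕ} {e : ℕ → ℕ} (he : StrictMono e) (p : Finset ℕ)
    (hp : ↑p ⊆ Set.range e) (hc : p.card = n) :
    ∃ x : Fin n → ℕ, StrictMono x ∧ p = Finset.univ.image (e ∘ x) := by
  have : ∀ i, ∃ a, e a = p.orderEmbOfFin hc i := fun i =>
    hp (by simpa using Finset.orderEmbOfFin_mem p hc i)
  choose x hx using this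
  refine ⟨x, fun i j hij => ?_, ?_⟩
  · apply he.lt_iff_lt.1
    rw [hx, hx]
    exact (p.orderEmbOfFin hc).strictMono hij
  · have : e ∘ x = p.orderEmbOfFin hc := funext hx
    rw [this]
    apply Finset.coe_injective
    simp

theorem canon_all (n : ℕ)
    (P : Set (Set (Finset ℕ))) (hP : IsPartitionOn (cube n) P)
    (Q : Set (Finset ℕ)) (hQ : Q ∈ Atoms n P) :
    ∃ I : Set ℕ, I ⊆ Set.Iio n ∧
      ∀ e : ℕ → ℕ, StrictMono e →
        (∀ z : Finset ℕ, ↑z ⊆ Set.range e → z.card = 2 * n → z ∈ Q) →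
        ICanon n P I (Set.range e) := by
  by_cases hex : ∃ e : ℕ → ℕ, StrictMono e ∧
      (∀ z : Finset ℕ, ↑z ⊆ Set.range e → z.card = 2 * n → z ∈ Q)
  · obtain ⟨e0, he0, hX0⟩ := hex
    refine ⟨{i | ∃ h : i < n, ∀ x y, StrictMono x → StrictMono y → rel P e0 x y →
      x ⟨i, h⟩ = y ⟨i, h⟩}, fun i hi => hi.1, ?_⟩
    intro e he hX p q hp hpc hq hqc
    obtain ⟨x, hx, rfl⟩ := exists_tuple he p hp hpc
    obtain ⟨y, hy, rfl⟩ := exists_tuple he q hq hqc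
    change rel P e x y ↔ _
    rw [relP_congr hQ he he0 hX hX0 hx hy hx hy (fun i j => ⟨Iff.rfl, Iff.rfl⟩),
      canon_core (rel_typeInv hP hQ he0 hX0) x y hx hy]
    constructor
    · rintro h i ⟨hi, h'⟩
      have := h ⟨i, hi⟩ h'
      have a1 := nth_image (e ∘ x) (he.comp hx) ⟨i, hi⟩
      have a2 := nth_image (e ∘ y) (he.comp hy) ⟨i, hi⟩
      simp only [Function.comp_apply] at a1 a2
      change nth (Finset.univ.image (e ∘ x)) i = _ at a1
      change nth (Finset.univ.image (e ∘ y)) i = _ at a2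
      rw [a1, a2, this]
    · intro h i hi
      have := h i ⟨i.2, hi⟩
      rw [nth_image (e ∘ x) (he.comp hx) i, nth_image (e ∘ y) (he.comp hy) i] at this
      exact he.injective this
  · refine ⟨∅, by simp, fun e he hX => absurd ⟨e, he, hX⟩ hex⟩

/-- with `m = n^{n·B·(B-1)}`, `B = C(2n,n)`, for every partition `P` of `[ω]^n`
and every `Q ∈ P*` there is `I ⊆ {0,…,n-1}` such that every infinite `X` with
`[X]^{2n} ⊆ Q` splits into a partition `{R_0, …, R_m}` with `R_0` finite of size `≤ m`
and each `R_i` (`1 ≤ i ≤ m`) an infinite `I`-canonical set for `P`. -/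
theorem stmt_2 (n : ℕ) (hn : 1 ≤ n) (m : ℕ)
    (hm : m = n ^ (n * Nat.choose (2 * n) n * (Nat.choose (2 * n) n - 1)))
    (P : Set (Set (Finset ℕ))) (hP : IsPartitionOn (cube n) P)
    (Q : Set (Finset ℕ)) (hQ : Q ∈ Atoms n P) :
    ∃ I : Set ℕ, I ⊆ Set.Iio n ∧
      ∀ X : Set ℕ, X.Infinite → (∀ z : Finset ℕ, ↑z ⊆ X → z.card = 2 * n → z ∈ Q) →
        ∃ R : Fin (m + 1) → Set ℕ,
          (⋃ j, R j) = X ∧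
          (∀ j k : Fin (m + 1), j ≠ k → R j ∩ R k = ∅) ∧
          (R 0).Finite ∧ (R 0).ncard ≤ m ∧
          ∀ j : Fin (m + 1), j ≠ 0 → (R j).Infinite ∧ ICanon n P I (R j) := by
  obtain ⟨I, hI, hcan⟩ := canon_all n P hP Q hQ
  refine ⟨I, hI, fun X hXinf hX => ?_⟩
  have hm0 : 0 < m := by rw [hm]; exact Nat.pow_pos (by omega)
  let e : ℕ → ℕ := Nat.nth (· ∈ X)
  have he : StrictMono e := Nat.nth_strictMono hXinf
  have hr : Set.range e = X := Nat.range_nth_of_infinite hXinf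
  have hc : ICanon n P I X := by
    have := hcan e he (by rw [hr]; exact hX)
    rwa [hr] at this
  refine ⟨fun j => {a | ∃ k, e k = a ∧ k % m + 1 = j.val}, ?_, ?_, ?_, ?_, ?_⟩
  · ext a
    simp only [Set.mem_iUnion, Set.mem_setOf_eq]
    constructor
    · rintro ⟨j, k, rfl, -⟩
      rw [← hr]; exact ⟨k, rfl⟩
    · intro ha
      rw [← hr] at ha
      obtain ⟨k, rfl⟩ := ha
      have := Nat.mod_lt k hm0
      exact ⟨⟨k % m + 1, by omega⟩, k, rfl, rfl⟩
  · intro j k hjk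
    ext a
    simp only [Set.mem_inter_iff, Set.mem_setOf_eq, Set.mem_empty_iff_false, iff_false]
    rintro ⟨⟨b, hb, hb'⟩, c, hc, hc'⟩
    have : b = c := he.injective (hb.trans hc.symm)
    subst this
    exact hjk (Fin.ext (by omega))
  · simp
  · simp
  · intro j hj
    have hj0 : j.val ≠ 0 := fun h => hj (Fin.ext h)
    constructor
    · have hinj : Function.Injective (fun t : ℕ => e (m * t + (j.val - 1))) := by
        intro s t hst
        have := he.injective hst
        exact Nat.eq_of_mul_eq_mul_left hm0 (by omega)
      refine (Set.infinite_range_of_injective hinj).mono ?_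
      rintro _ ⟨t, rfl⟩
      refine ⟨_, rfl, ?_⟩
      have := j.2
      rw [Nat.mul_add_mod, Nat.mod_eq_of_lt (by omega)]
      omega
    · have hsub : {a | ∃ k, e k = a ∧ k % m + 1 = j.val} ⊆ X := by
        rintro a ⟨k, rfl, -⟩
        rw [← hr]; exact ⟨k, rfl⟩
      intro p q hp hpc hq hqc
      exact hc p q (hp.trans hsub) hpc (hq.trans hsub) hqc
end

section
/- Let n ≥ 1, let X ⊆ ℕ, let x, y ∈ [X]^n, let p, q ∈ [2n]^n with x →_{pq} y, and let i < n. Then i ∈ I_{pq} if and only if x_[i] = y_[i]. -/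
theorem nth_eq_emb (s : Finset ℕ) (m : ℕ) (h : s.card = m) (i : Fin m) :
    nth s i = s.orderEmbOfFin h i := by
  rw [Finset.orderEmbOfFin_apply]
  unfold nth
  rw [List.getD_eq_getElem]
  rfl

theorem nth_image_s5 (n m : ℕ) (p z : Finset ℕ) (hz : z.card = m) (hp : p.card = n)
    (hpm : ∀ a ∈ p, a < m) (hc : (p.image (nth z)).card = n) (i : Fin n) :
    nth (p.image (nth z)) i = nth z (nth p i) := by
  have hmem : ∀ j : Fin n, nth p j ∈ p := fun j => by
    rw [nth_eq_emb p n hp j]; exact Finset.orderEmbOfFin_mem p hp j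
  have key := Finset.orderEmbOfFin_unique hc (f := fun j : Fin n => nth z (nth p j))
    (fun j => Finset.mem_image_of_mem _ (hmem j))
    (fun a b hab => by
      have h1 : nth p a < nth p b := by
        rw [nth_eq_emb p n hp a, nth_eq_emb p n hp b]
        exact (p.orderEmbOfFin hp).strictMono hab
      have ha := nth_eq_emb z m hz ⟨nth p a, hpm _ (hmem a)⟩
      have hb := nth_eq_emb z m hz ⟨nth p b, hpm _ (hmem b)⟩
      simp only at ha hb
      show nth z (nth p a) < nth z (nth p b)
      rw [ha, hb]
      exact (z.orderEmbOfFin hz).strictMono h1)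
  rw [nth_eq_emb _ n hc i, ← key]

/-- if `x →_{pq} y` then for `i < n`, `i ∈ I_{pq}` iff `x_[i] = y_[i]`. -/
theorem stmt_5 (n : ℕ) (hn : 1 ≤ n) (X : Set ℕ)
    (x y : Finset ℕ) (hx : ↑x ⊆ X) (hxc : x.card = n) (hy : ↑y ⊆ X) (hyc : y.card = n)
    (p q : Finset ℕ) (hp : p ∈ idx n) (hq : q ∈ idx n)
    (harr : Arrow X n p q x y) (i : ℕ) (hi : i < n) :
    i ∈ Ipq n p q ↔ nth x i = nth y i := by
  obtain ⟨z, -, hz, rfl, rfl⟩ := harr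
  obtain ⟨hps, hpc⟩ := Finset.mem_powersetCard.1 hp
  obtain ⟨hqs, hqc⟩ := Finset.mem_powersetCard.1 hq
  have hpm : ∀ a ∈ p, a < 2 * n := fun a ha => Finset.mem_range.1 (hps ha)
  have hqm : ∀ a ∈ q, a < 2 * n := fun a ha => Finset.mem_range.1 (hqs ha)
  have e1 := nth_image_s5 n _ p z hz hpc hpm hxc ⟨i, hi⟩
  have e2 := nth_image_s5 n _ q z hz hqc hqm hyc ⟨i, hi⟩
  simp only at e1 e2
  rw [e1, e2]
  have m1 : nth p i ∈ p := by
    rw [nth_eq_emb p n hpc ⟨i, hi⟩]; exact Finset.orderEmbOfFin_mem p hpc _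
  have m2 : nth q i ∈ q := by
    rw [nth_eq_emb q n hqc ⟨i, hi⟩]; exact Finset.orderEmbOfFin_mem q hqc _
  constructor
  · rintro ⟨-, h⟩
    rw [h]
  · intro h
    refine ⟨hi, ?_⟩
    have ha := nth_eq_emb z _ hz ⟨nth p i, hpm _ m1⟩
    have hb := nth_eq_emb z _ hz ⟨nth q i, hqm _ m2⟩
    simp only at ha hb
    rw [ha, hb] at h
    exact congrArg Fin.val ((z.orderEmbOfFin hz).injective h)
end
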